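/- arXiv:2009.07759 — 6 statements merged into one kernel-verified Lean document; each statement's English description precedes it below -/
import Mathlib

section
/- Let J ∈ M_n(ℂ) be a fundamental symmetry. A quantum J-state is pure if and only if it cannot be written as a convex combination βB₁ + (1−β)B₂ with β ∈ (0,1) and B₁ ≠ B₂ quantum J-states; that is, the pure quantum J-states are exactly the extreme points of the convex set 𝔖_J(ℂⁿ) of quantum J-states. -/
/-!
Since `J² = 1`, the map `B ↦ J * B` is a linear bijection; it carries the quantum `J`-states onto
the density matrices (positive semidefinite, trace one) and the pure `J`-states onto the rank-one
projections `e e*`. So the claim reduces to the classical one about density matrices.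

* A projection `P = e e*` is extreme: if `P = β C₁ + (1 - β) C₂`, then compressing by `1 - P` gives
  `(1 - P) C₁ (1 - P) = 0`, which for positive semidefinite `C₁` forces `C₁ = C₁ P`, hence
  `C₁ = P C₁ P` is a multiple of `P`, equal to `P` by the trace (`eq_rankOne_of_convex`).
* A density matrix `C` has a unit eigenvector `e` with eigenvalue `t > 0`. With `P = e e*`, the
  remainder `C - t P = (1 - P) C (1 - P)` is positive semidefinite (`exists_rankOne_split`). It has
  trace `1 - t`, so either `t = 1` and `C = P`, or `C` is a proper convex combination of `P` and
  the normalized remainder; extremality then makes the two equal, so again `C = P`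
  (`rankOne_of_extreme`).
-/

open Matrix
open scoped ComplexOrder

/-- A fundamental symmetry: `Jᴴ = J` and `J² = 1`. -/
def IsFundamentalSymmetry {n : ℕ} (J : Matrix (Fin n) (Fin n) ℂ) : Prop :=
  Jᴴ = J ∧ J * J = 1

/-- A matrix `A` is `J`-positive if `J * A` is positive semidefinite. -/
def JPositive {n : ℕ} (J A : Matrix (Fin n) (Fin n) ℂ) : Prop :=
  (J * A).PosSemidef

/-- A quantum `J`-state: a `J`-positive matrix `B` with `Tr (B * J) = 1`. -/
def IsJState {n : ℕ} (J B : Matrix (Fin n) (Fin n) ℂ) : Prop :=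
  JPositive J B ∧ (B * J).trace = 1

/-- A pure quantum `J`-state: a matrix of the form `x ↦ ⟨x, e⟩ (J e)`, i.e.
`(J e) ⊗ e*`, for a unit vector `e`. -/
def IsPureJState {n : ℕ} (J P : Matrix (Fin n) (Fin n) ℂ) : Prop :=
  ∃ e : Fin n → ℂ, star e ⬝ᵥ e = 1 ∧ P = vecMulVec (J *ᵥ e) (star e)

theorem rankOne_isHermitian {n : ℕ} (e : Fin n → ℂ) :
    (vecMulVec e (star e))ᴴ = vecMulVec e (star e) := by
  rw [conjTranspose_vecMulVec, star_star]

theorem rankOne_mul_self {n : ℕ} {e : Fin n → ℂ} (he : star e ⬝ᵥ e = 1) :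
    vecMulVec e (star e) * vecMulVec e (star e) = vecMulVec e (star e) := by
  rw [vecMulVec_mul_vecMulVec, he, one_smul]

theorem rankOne_trace {n : ℕ} {e : Fin n → ℂ} (he : star e ⬝ᵥ e = 1) :
    (vecMulVec e (star e)).trace = 1 := by
  rw [trace_vecMulVec, dotProduct_comm, he]

/-- A positive semidefinite matrix whose compression by `Q` vanishes is annihilated by `Q`. -/
theorem mul_eq_zero_of_compression {n : ℕ} {C Q : Matrix (Fin n) (Fin n) ℂ}
    (hC : C.PosSemidef) (h : Qᴴ * C * Q = 0) : C * Q = 0 := by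
  apply ext_of_mulVec_single
  intro i
  rw [← mulVec_mulVec, zero_mulVec]
  refine (hC.dotProduct_mulVec_zero_iff _).1 ?_
  rw [star_mulVec, ← dotProduct_mulVec, mulVec_mulVec, mulVec_mulVec, h, zero_mulVec,
    dotProduct_zero]

/-- Any component of a convex decomposition of `e e*` into density matrices is `e e*`. -/
theorem eq_rankOne_of_convex {n : ℕ} {e : Fin n → ℂ} (he : star e ⬝ᵥ e = 1)
    {β : ℝ} (h0 : 0 < β) (h1 : β < 1) {C₁ C₂ : Matrix (Fin n) (Fin n) ℂ}
    (hC₁ : C₁.PosSemidef) (ht : C₁.trace = 1) (hC₂ : C₂.PosSemidef)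
    (h : vecMulVec e (star e) = β • C₁ + (1 - β) • C₂) : C₁ = vecMulVec e (star e) := by
  set P := vecMulVec e (star e) with hP
  have hPP : P * P = P := rankOne_mul_self he
  have hPH : Pᴴ = P := rankOne_isHermitian e
  have hQH : (1 - P)ᴴ = 1 - P := by rw [conjTranspose_sub, conjTranspose_one, hPH]
  have hz : β • ((1 - P)ᴴ * C₁ * (1 - P)) + (1 - β) • ((1 - P)ᴴ * C₂ * (1 - P)) = 0 := by
    calc _ = (1 - P)ᴴ * (β • C₁ + (1 - β) • C₂) * (1 - P) := by
          simp only [Matrix.mul_add, Matrix.add_mul, Matrix.mul_smul, Matrix.smul_mul]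
      _ = 0 := by
          rw [← h, hQH, Matrix.sub_mul, Matrix.one_mul, hPP, sub_self, Matrix.zero_mul]
  have p₁ : (β • ((1 - P)ᴴ * C₁ * (1 - P))).PosSemidef :=
    (hC₁.conjTranspose_mul_mul_same _).smul h0.le
  have p₂ : ((1 - β) • ((1 - P)ᴴ * C₂ * (1 - P))).PosSemidef :=
    (hC₂.conjTranspose_mul_mul_same _).smul (sub_pos.2 h1).le
  -- Two positive semidefinite matrices with zero sum vanish, because their traces do.
  have z₁ : β • ((1 - P)ᴴ * C₁ * (1 - P)) = 0 := by
    rw [← p₁.trace_eq_zero_iff]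
    have := congrArg trace hz
    rw [trace_add, trace_zero] at this
    exact ((add_eq_zero_iff_of_nonneg p₁.trace_nonneg p₂.trace_nonneg).1 this).1
  have hCQ : C₁ * (1 - P) = 0 :=
    mul_eq_zero_of_compression hC₁ ((smul_eq_zero.1 z₁).resolve_left h0.ne')
  have hCP : C₁ = C₁ * P := by
    rwa [Matrix.mul_sub, Matrix.mul_one, sub_eq_zero] at hCQ
  have hPC : C₁ = P * C₁ := by
    have := congrArg conjTranspose hCP
    rwa [conjTranspose_mul, hPH, hC₁.isHermitian.eq] at this
  have hc : C₁ = (star e ⬝ᵥ C₁ *ᵥ e) • P := by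
    rw [hPC, hCP]
    conv_lhs => rw [← Matrix.mul_assoc, hP, vecMulVec_mul, vecMulVec_mul_vecMulVec]
    rw [← hCP, ← hPC, ← dotProduct_mulVec, vecMulVec_smul]
  have hc1 : star e ⬝ᵥ C₁ *ᵥ e = 1 := by
    have := congrArg trace hc
    rwa [ht, trace_smul, rankOne_trace he, smul_eq_mul, mul_one, eq_comm] at this
  rwa [hc1, one_smul] at hc

/-- A density matrix splits off a positive multiple of a rank-one projection, namely the
projection onto an eigenvector, with positive semidefinite remainder. -/
theorem exists_rankOne_split {n : ℕ} {C : Matrix (Fin n) (Fin n) ℂ}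
    (hC : C.PosSemidef) (ht : C.trace = 1) :
    ∃ (e : Fin n → ℂ) (t : ℝ), star e ⬝ᵥ e = 1 ∧ 0 < t ∧
      (C - t • vecMulVec e (star e)).PosSemidef := by
  obtain ⟨i, hi⟩ : ∃ i, hC.isHermitian.eigenvalues i ≠ 0 := by
    by_contra! hall
    rw [hC.isHermitian.trace_eq_sum_eigenvalues] at ht
    simp [hall] at ht
  set t := hC.isHermitian.eigenvalues i
  set e : Fin n → ℂ := ⇑(hC.isHermitian.eigenvectorBasis i)
  have hev : C *ᵥ e = t • e := hC.isHermitian.mulVec_eigenvectorBasis i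
  have he : star e ⬝ᵥ e = 1 := by
    have := hC.isHermitian.eigenvectorBasis.inner_eq_one i
    rw [EuclideanSpace.inner_eq_star_dotProduct, dotProduct_comm] at this
    exact this
  refine ⟨e, t, he, lt_of_le_of_ne (hC.eigenvalues_nonneg i) hi.symm, ?_⟩
  have hPP := rankOne_mul_self he
  have hPH := rankOne_isHermitian e
  have hCP : C * vecMulVec e (star e) = t • vecMulVec e (star e) := by
    rw [mul_vecMulVec, hev, smul_vecMulVec]
  set P := vecMulVec e (star e)
  have hPC : P * C = t • P := by
    have := congrArg conjTranspose hCP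
    rwa [conjTranspose_mul, conjTranspose_smul, hPH, hC.isHermitian.eq, star_trivial] at this
  have key : C - t • P = (1 - P)ᴴ * C * (1 - P) := by
    rw [conjTranspose_sub, conjTranspose_one, hPH, Matrix.sub_mul, Matrix.one_mul, hPC,
      Matrix.mul_sub, Matrix.mul_one, Matrix.sub_mul, hCP, Matrix.smul_mul, hPP, sub_self, sub_zero]
  rw [key]
  exact hC.conjTranspose_mul_mul_same _

/-- An extreme density matrix is a rank-one projection. -/
theorem rankOne_of_extreme {n : ℕ} {C : Matrix (Fin n) (Fin n) ℂ}
    (hC : C.PosSemidef) (ht : C.trace = 1)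
    (hext : ∀ β : ℝ, 0 < β → β < 1 → ∀ C₁ C₂ : Matrix (Fin n) (Fin n) ℂ,
      C₁.PosSemidef → C₁.trace = 1 → C₂.PosSemidef → C₂.trace = 1 →
      C = β • C₁ + (1 - β) • C₂ → C₁ = C₂) :
    ∃ e : Fin n → ℂ, star e ⬝ᵥ e = 1 ∧ C = vecMulVec e (star e) := by
  obtain ⟨e, t, he, ht0, hR⟩ := exists_rankOne_split hC ht
  refine ⟨e, he, ?_⟩
  have hPt := rankOne_trace he
  have hPpos : (vecMulVec e (star e)).PosSemidef := posSemidef_vecMulVec_self_star e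
  set P := vecMulVec e (star e)
  have hRt : (C - t • P).trace = ((1 - t : ℝ) : ℂ) := by
    rw [trace_sub, trace_smul, ht, hPt]
    simp
  have hle : 0 ≤ 1 - t := by
    have := hR.trace_nonneg
    rw [hRt] at this
    exact_mod_cast this
  rcases hle.eq_or_lt with h1 | h1
  · have : C - t • P = 0 := by
      rw [← hR.trace_eq_zero_iff, hRt, ← h1, Complex.ofReal_zero]
    rwa [show t = 1 by linarith, one_smul, sub_eq_zero] at this
  · have hsplit : C = t • P + (1 - t) • ((1 - t)⁻¹ • (C - t • P)) := by
      rw [smul_inv_smul₀ h1.ne', add_sub_cancel]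
    have heq := hext t ht0 (by linarith) P ((1 - t)⁻¹ • (C - t • P)) hPpos hPt
      (hR.smul (inv_nonneg.2 hle)) (by
        rw [trace_smul, hRt, Complex.real_smul, ← Complex.ofReal_mul, inv_mul_cancel₀ h1.ne',
          Complex.ofReal_one]) hsplit
    rw [← heq, ← add_smul, add_sub_cancel, one_smul] at hsplit
    exact hsplit

/-- `B` is a quantum `J`-state exactly when `J * B` is a density matrix. -/
theorem isJState_iff {n : ℕ} (J B : Matrix (Fin n) (Fin n) ℂ) :
    IsJState J B ↔ (J * B).PosSemidef ∧ (J * B).trace = 1 := by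
  rw [IsJState, JPositive, trace_mul_comm]

/-- A quantum `J`-state is pure iff it cannot be written as a nontrivial convex
combination of two distinct quantum `J`-states; that is, the pure quantum `J`-states
are exactly the extreme points of the convex set of quantum `J`-states. -/
theorem isPureJState_iff_extreme {n : ℕ}
    (J : Matrix (Fin n) (Fin n) ℂ) (hJ : IsFundamentalSymmetry J)
    (B : Matrix (Fin n) (Fin n) ℂ) :
    IsPureJState J B ↔
      (IsJState J B ∧ ∀ (β : ℝ), 0 < β → β < 1 →
        ∀ B₁ B₂ : Matrix (Fin n) (Fin n) ℂ, IsJState J B₁ → IsJState J B₂ →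
          B = β • B₁ + (1 - β) • B₂ → B₁ = B₂) := by
  have hJJ : ∀ A : Matrix (Fin n) (Fin n) ℂ, J * (J * A) = A := fun A => by
    rw [← Matrix.mul_assoc, hJ.2, Matrix.one_mul]
  simp only [isJState_iff]
  constructor
  · rintro ⟨e, he, rfl⟩
    have hJB : J * vecMulVec (J *ᵥ e) (star e) = vecMulVec e (star e) := by
      rw [← mul_vecMulVec, hJJ]
    rw [hJB]
    refine ⟨⟨posSemidef_vecMulVec_self_star e, rankOne_trace he⟩, ?_⟩
    rintro β h0 h1 B₁ B₂ ⟨hp₁, ht₁⟩ ⟨hp₂, ht₂⟩ h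
    have hc : vecMulVec e (star e) = β • (J * B₁) + (1 - β) • (J * B₂) := by
      rw [← hJB, h, Matrix.mul_add, Matrix.mul_smul, Matrix.mul_smul]
    have e₁ := eq_rankOne_of_convex he h0 h1 hp₁ ht₁ hp₂ hc
    have e₂ := eq_rankOne_of_convex he (sub_pos.2 h1) (sub_lt_self 1 h0) hp₂ ht₂ hp₁
      (by rw [hc, sub_sub_cancel, add_comm])
    rw [← hJJ B₁, e₁, ← e₂, hJJ]
  · rintro ⟨⟨hp, ht⟩, hext⟩
    obtain ⟨e, he, hB⟩ := rankOne_of_extreme hp ht (by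
      intro β h0 h1 C₁ C₂ hp₁ ht₁ hp₂ ht₂ h
      have := hext β h0 h1 (J * C₁) (J * C₂) (by rw [hJJ]; exact ⟨hp₁, ht₁⟩)
        (by rw [hJJ]; exact ⟨hp₂, ht₂⟩)
        (by rw [← hJJ B, h, Matrix.mul_add, Matrix.mul_smul, Matrix.mul_smul])
      rw [← hJJ C₁, this, hJJ])
    exact ⟨e, he, by rw [← hJJ B, hB, mul_vecMulVec]⟩
end

section
/- Let J ∈ M_n(ℂ) be a fundamental symmetry and let 𝔰 be a J-state automorphism, i.e., a bijection of the set 𝔖_J(ℂⁿ) of quantum J-states onto itself satisfying 𝔰(βS₁ + (1−β)S₂) = β𝔰(S₁) + (1−β)𝔰(S₂) for all quantum J-states S₁, S₂ and all β ∈ (0,1). Then 𝔰 extends to a unique real-linear map 𝔰̃ on the real vector space M_n(ℂ)^{sa}(J) = {A ∈ M_n(ℂ) : A^♮ = A} of J-selfadjoint matrices that maps J-positive matrices to J-positive matrices; moreover 𝔰̃ is a bijection of M_n(ℂ)^{sa}(J) onto itself and satisfies Tr(𝔰̃(T) J) = Tr(T J) for all T ∈ M_n(ℂ)^{sa}(J).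 -/
/-!
Put `τ A = Re Tr (A J)`. The `J`-positive matrices form a convex cone `P` on which `τ` is
nonnegative and vanishes only at `0` (a positive semidefinite matrix of trace zero is zero), and the
`J`-states are exactly the elements of `P` with `τ = 1`, a base of the cone. Moreover
`P - P` is the space of all `J`-selfadjoint matrices, since a Hermitian `H` is
`((H + 1)² - (H - 1)²) / 4`.

The rest is a fact about cones with a base: an affine bijection `s` of the base extends
to the additive, positively homogeneous bijection `x ↦ τ x • s ((τ x)⁻¹ • x)` of `P`
(`coneExt`), and any such map extends to differences by `f (a - b) = f a - f b`. The formula on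
`P` is forced by homogeneity and that on `P - P` by additivity, which gives uniqueness.
-/

open Matrix
open scoped ComplexOrder

/-- The `J`-adjoint `M^♮ = J Mᴴ J`. -/
noncomputable def jAdj {n : ℕ} (J M : Matrix (Fin n) (Fin n) ℂ) : Matrix (Fin n) (Fin n) ℂ :=
  J * Mᴴ * J

/-- A map `f` is a real-linear extension of `𝔰` to the `J`-selfadjoint matrices,
mapping `J`-positive matrices to `J`-positive matrices. -/
def IsRealLinearExtension {n : ℕ} (J : Matrix (Fin n) (Fin n) ℂ)
    (𝔰 f : Matrix (Fin n) (Fin n) ℂ → Matrix (Fin n) (Fin n) ℂ) : Prop :=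
  (∀ A B : Matrix (Fin n) (Fin n) ℂ, jAdj J A = A → jAdj J B = B →
      f (A + B) = f A + f B) ∧
  (∀ (r : ℝ) (A : Matrix (Fin n) (Fin n) ℂ), jAdj J A = A → f (r • A) = r • f A) ∧
  (∀ S, IsJState J S → f S = 𝔰 S) ∧
  (∀ A, JPositive J A → JPositive J (f A))

section Cone

variable {E : Type*} [AddCommGroup E] [Module ℝ E]

/-- A convex cone `P`, containing `0`, with a linear functional `τ` that is nonnegative on `P`
and vanishes on `P` only at `0`; then `{x | P x ∧ τ x = 1}` is a base of `P`. -/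
structure BasedCone (P : E → Prop) (τ : E →ₗ[ℝ] ℝ) : Prop where
  zero : P 0
  add : ∀ {x y}, P x → P y → P (x + y)
  smul : ∀ {r : ℝ} {x}, 0 ≤ r → P x → P (r • x)
  nonneg : ∀ {x}, P x → 0 ≤ τ x
  eq_zero : ∀ {x}, P x → τ x = 0 → x = 0

/-- The positively homogeneous extension to the cone of a map `s` on its base. At `τ x = 0`,
where the inverse is a junk value, it equals `0`, as it should. -/
noncomputable def coneExt (τ : E →ₗ[ℝ] ℝ) (s : E → E) (x : E) : E :=
  τ x • s ((τ x)⁻¹ • x)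

variable {P : E → Prop} {τ : E →ₗ[ℝ] ℝ} {s : E → E}

lemma coneExt_zero : coneExt τ s 0 = 0 := by simp [coneExt]

lemma BasedCone.eq_zero_or_pos (h : BasedCone P τ) {x : E} (hx : P x) : x = 0 ∨ 0 < τ x := by
  rcases (h.nonneg hx).eq_or_lt with h0 | h0
  · exact Or.inl (h.eq_zero hx h0.symm)
  · exact Or.inr h0

lemma BasedCone.normalize (h : BasedCone P τ) {x : E} (hx : P x) (h0 : 0 < τ x) :
    P ((τ x)⁻¹ • x) ∧ τ ((τ x)⁻¹ • x) = 1 :=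
  ⟨h.smul (inv_nonneg.2 h0.le) hx, by simp [h0.ne']⟩

lemma coneExt_base {x : E} (hx : τ x = 1) : coneExt τ s x = s x := by simp [coneExt, hx]

lemma coneExt_smul (r : ℝ) (x : E) : coneExt τ s (r • x) = r • coneExt τ s x := by
  by_cases hr : r = 0
  · simp [hr, coneExt_zero]
  · have : (τ (r • x))⁻¹ • r • x = (τ x)⁻¹ • x := by
      rw [smul_smul, map_smul, smul_eq_mul, _root_.mul_inv_rev, mul_assoc,
        inv_mul_cancel₀ hr, mul_one]
    rw [coneExt, this, coneExt, map_smul, smul_eq_mul, mul_smul]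

lemma BasedCone.coneExt_mem (h : BasedCone P τ)
    (hs : ∀ x, P x ∧ τ x = 1 → P (s x) ∧ τ (s x) = 1) {x : E} (hx : P x) :
    P (coneExt τ s x) ∧ τ (coneExt τ s x) = τ x := by
  rcases h.eq_zero_or_pos hx with rfl | h0
  · simp [coneExt_zero, h.zero]
  · have := hs _ (h.normalize hx h0)
    exact ⟨h.smul h0.le this.1, by rw [coneExt, map_smul, this.2, smul_eq_mul, mul_one]⟩

/-- The normalization of `x + y` is a convex combination of those of `x` and `y`, so affinity
of `s` on the base gives additivity on the cone. -/
lemma BasedCone.coneExt_add (h : BasedCone P τ)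
    (haff : ∀ x y, (P x ∧ τ x = 1) → (P y ∧ τ y = 1) → ∀ β : ℝ, 0 < β → β < 1 →
      s (β • x + (1 - β) • y) = β • s x + (1 - β) • s y) {x y : E} (hx : P x) (hy : P y) :
    coneExt τ s (x + y) = coneExt τ s x + coneExt τ s y := by
  rcases h.eq_zero_or_pos hx with rfl | hx0
  · simp [coneExt_zero]
  rcases h.eq_zero_or_pos hy with rfl | hy0
  · simp [coneExt_zero]
  have hT : 0 < τ x + τ y := add_pos hx0 hy0
  have hβ : 1 - τ x / (τ x + τ y) = τ y / (τ x + τ y) := by field_simp; ring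
  have key := haff _ _ (h.normalize hx hx0) (h.normalize hy hy0) (τ x / (τ x + τ y))
    (div_pos hx0 hT) ((div_lt_one hT).2 (by linarith))
  have e : (τ x / (τ x + τ y)) • (τ x)⁻¹ • x + (τ y / (τ x + τ y)) • (τ y)⁻¹ • y
      = (τ x + τ y)⁻¹ • (x + y) := by
    rw [smul_smul, smul_smul, smul_add]
    congr 2 <;> field_simp
  rw [hβ, e] at key
  rw [coneExt, map_add, key, smul_add, smul_smul, smul_smul, mul_div_cancel₀ _ hT.ne',
    mul_div_cancel₀ _ hT.ne', coneExt, coneExt]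

lemma BasedCone.coneExt_injOn (h : BasedCone P τ)
    (hs : Set.BijOn s {x | P x ∧ τ x = 1} {x | P x ∧ τ x = 1}) {x y : E} (hx : P x) (hy : P y)
    (hxy : coneExt τ s x = coneExt τ s y) : x = y := by
  have ht : τ x = τ y := by
    rw [← (h.coneExt_mem hs.mapsTo hx).2, hxy, (h.coneExt_mem hs.mapsTo hy).2]
  rcases h.eq_zero_or_pos hx with rfl | hx0
  · exact (h.eq_zero hy (by rw [← ht, map_zero])).symm
  have hy0 : 0 < τ y := ht ▸ hx0
  rw [coneExt, coneExt, ← ht] at hxy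
  have h1 := smul_right_injective E hx0.ne' hxy
  have h2 := hs.injOn (h.normalize hx hx0) (by rw [ht]; exact h.normalize hy hy0) h1
  exact smul_right_injective E (inv_ne_zero hx0.ne') h2

lemma BasedCone.coneExt_surjOn (h : BasedCone P τ)
    (hs : Set.BijOn s {x | P x ∧ τ x = 1} {x | P x ∧ τ x = 1}) {y : E} (hy : P y) :
    ∃ x, P x ∧ coneExt τ s x = y := by
  rcases h.eq_zero_or_pos hy with rfl | hy0
  · exact ⟨0, h.zero, coneExt_zero⟩
  obtain ⟨x, hx, hxy⟩ := hs.surjOn (h.normalize hy hy0)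
  refine ⟨τ y • x, h.smul hy0.le hx.1, ?_⟩
  rw [coneExt_smul, coneExt_base hx.2, hxy, smul_inv_smul₀ (ne_of_gt hy0)]

/-- An affine bijection of the base of a cone extends uniquely to a linear map on the
space `{x | V x}` of differences of elements of the cone. -/
theorem BasedCone.exists_extension (h : BasedCone P τ)
    (hs : Set.BijOn s {x | P x ∧ τ x = 1} {x | P x ∧ τ x = 1})
    (haff : ∀ x y, (P x ∧ τ x = 1) → (P y ∧ τ y = 1) → ∀ β : ℝ, 0 < β → β < 1 →
      s (β • x + (1 - β) • y) = β • s x + (1 - β) • s y)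
    {V : E → Prop} (hV : ∀ x, V x ↔ ∃ a b, P a ∧ P b ∧ x = a - b) :
    ∃ f : E → E,
      ((∀ x y, V x → V y → f (x + y) = f x + f y) ∧
        (∀ (r : ℝ) x, V x → f (r • x) = r • f x) ∧
        (∀ x, P x ∧ τ x = 1 → f x = s x) ∧ (∀ x, P x → P (f x))) ∧
      Set.BijOn f {x | V x} {x | V x} ∧ (∀ x, V x → τ (f x) = τ x) ∧
      (∀ g : E → E, (∀ x y, V x → V y → g (x + y) = g x + g y) →
        (∀ (r : ℝ) x, V x → g (r • x) = r • g x) → (∀ x, P x ∧ τ x = 1 → g x = s x) →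
        Set.EqOn g f {x | V x}) := by
  classical
  choose! a b ha hb hab using fun x => (hV x).1
  let p := coneExt τ s
  have padd : ∀ {x y}, P x → P y → p (x + y) = p x + p y := h.coneExt_add haff
  have pmem : ∀ {x}, P x → P (p x) ∧ τ (p x) = τ x := h.coneExt_mem hs.mapsTo
  have psmul : ∀ (r : ℝ) x, p (r • x) = r • p x := coneExt_smul
  let f : E → E := fun x => p (a x) - p (b x)
  have Vsub : ∀ {c d}, P c → P d → V (c - d) := fun hc hd => (hV _).2 ⟨_, _, hc, hd, rfl⟩
  have VP : ∀ {c}, P c → V c := fun hc => by simpa using Vsub hc h.zero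
  -- The value of `f` does not depend on the chosen decomposition.
  have fsub : ∀ {c d}, P c → P d → f (c - d) = p c - p d := by
    intro c d hc hd
    have hv := Vsub hc hd
    have e : a (c - d) + d = c + b (c - d) := by
      have := hab _ hv
      rw [sub_eq_sub_iff_add_eq_add] at this
      rw [this]
    have := congrArg p e
    rw [padd (ha _ hv) hd, padd hc (hb _ hv)] at this
    exact sub_eq_sub_iff_add_eq_add.2 this
  have fP : ∀ {c}, P c → f c = p c := fun {c} hc => by
    have := fsub hc h.zero
    rwa [sub_zero, show p 0 = 0 from coneExt_zero, sub_zero] at this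
  refine ⟨f, ⟨?_, ?_, ?_, ?_⟩, ⟨?_, ?_, ?_⟩, ?_, ?_⟩
  · intro x y hx hy
    obtain ⟨c, d, hc, hd, rfl⟩ := (hV x).1 hx
    obtain ⟨c', d', hc', hd', rfl⟩ := (hV y).1 hy
    rw [sub_add_sub_comm, fsub (h.add hc hc') (h.add hd hd'), fsub hc hd, fsub hc' hd',
      padd hc hc', padd hd hd', sub_add_sub_comm]
  · intro r x hx
    obtain ⟨c, d, hc, hd, rfl⟩ := (hV x).1 hx
    rcases le_total 0 r with hr | hr
    · rw [smul_sub, fsub (h.smul hr hc) (h.smul hr hd), fsub hc hd, psmul, psmul, smul_sub]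
    · have hr' : 0 ≤ -r := neg_nonneg.2 hr
      have e : r • (c - d) = (-r) • d - (-r) • c := by module
      rw [e, fsub (h.smul hr' hd) (h.smul hr' hc), fsub hc hd, psmul, psmul]
      module
  · intro x hx
    rw [fP hx.1]
    exact coneExt_base hx.2
  · intro x hx
    rw [fP hx]
    exact (pmem hx).1
  · intro x hx
    exact Vsub (pmem (ha x hx)).1 (pmem (hb x hx)).1
  · intro x hx y hy hxy
    obtain ⟨c, d, hc, hd, rfl⟩ := (hV x).1 hx
    obtain ⟨c', d', hc', hd', rfl⟩ := (hV y).1 hy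
    rw [fsub hc hd, fsub hc' hd', sub_eq_sub_iff_add_eq_add, ← padd hc hd', ← padd hc' hd] at hxy
    exact sub_eq_sub_iff_add_eq_add.2 (h.coneExt_injOn hs (h.add hc hd') (h.add hc' hd) hxy)
  · intro y hy
    obtain ⟨c, d, hc, hd, rfl⟩ := (hV y).1 hy
    obtain ⟨c', hc', rfl⟩ := h.coneExt_surjOn hs hc
    obtain ⟨d', hd', rfl⟩ := h.coneExt_surjOn hs hd
    exact ⟨c' - d', Vsub hc' hd', fsub hc' hd'⟩
  · intro x hx
    obtain ⟨c, d, hc, hd, rfl⟩ := (hV x).1 hx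
    rw [fsub hc hd, map_sub, map_sub, (pmem hc).2, (pmem hd).2]
  · intro g gadd gsmul gs x hx
    have gP : ∀ {c}, P c → g c = p c := by
      intro c hc
      rcases h.eq_zero_or_pos hc with rfl | h0
      · have := gsmul 0 0 (VP h.zero)
        rw [zero_smul, zero_smul] at this
        rw [this]
        exact coneExt_zero.symm
      · have hn := h.normalize hc h0
        have := gsmul (τ c) _ (VP hn.1)
        rw [smul_inv_smul₀ h0.ne', gs _ hn] at this
        exact this
    obtain ⟨c, d, hc, hd, rfl⟩ := (hV x).1 hx
    have := gadd _ _ (Vsub hc hd) (VP hd)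
    rw [sub_add_cancel, gP hc, gP hd] at this
    rw [fsub hc hd, this, add_sub_cancel_right]

end Cone

/-- The real-linear functional `A ↦ Re Tr (A J)`. -/
noncomputable def jTrace {n : ℕ} (J : Matrix (Fin n) (Fin n) ℂ) :
    Matrix (Fin n) (Fin n) ℂ →ₗ[ℝ] ℝ where
  toFun A := ((A * J).trace).re
  map_add' A B := by simp [add_mul]
  map_smul' r A := by simp

section JMatrices

variable {n : ℕ} {J : Matrix (Fin n) (Fin n) ℂ}

lemma jAdj_eq_iff (hJ : IsFundamentalSymmetry J) (A : Matrix (Fin n) (Fin n) ℂ) :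
    jAdj J A = A ↔ (J * A).IsHermitian := by
  rw [Matrix.IsHermitian, conjTranspose_mul, hJ.1, jAdj]
  constructor <;> intro h
  · rw [← congrArg (J * ·) h]
    simp only [← mul_assoc, hJ.2, one_mul]
  · rw [mul_assoc, h, ← mul_assoc, hJ.2, one_mul]

lemma trace_mul_eq_jTrace (hJ : IsFundamentalSymmetry J) {A : Matrix (Fin n) (Fin n) ℂ}
    (hA : jAdj J A = A) : (A * J).trace = (jTrace J A : ℂ) := by
  have h := (jAdj_eq_iff hJ A).1 hA
  have h2 : star (A * J).trace = (A * J).trace := by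
    rw [trace_mul_comm, ← trace_conjTranspose, h.eq]
  exact (Complex.conj_eq_iff_re.1 h2).symm

lemma JPositive.jAdj_eq (hJ : IsFundamentalSymmetry J) {A : Matrix (Fin n) (Fin n) ℂ}
    (hA : JPositive J A) : jAdj J A = A :=
  (jAdj_eq_iff hJ A).2 hA.isHermitian

lemma isJState_iff_s3 (hJ : IsFundamentalSymmetry J) (A : Matrix (Fin n) (Fin n) ℂ) :
    IsJState J A ↔ JPositive J A ∧ jTrace J A = 1 := by
  refine and_congr_right fun hA => ?_
  rw [trace_mul_eq_jTrace hJ (hA.jAdj_eq hJ)]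
  exact_mod_cast Iff.rfl

lemma basedCone_jPositive (hJ : IsFundamentalSymmetry J) :
    BasedCone (JPositive J) (jTrace J) where
  zero := by simp [JPositive, PosSemidef.zero]
  add hx hy := by
    rw [JPositive, mul_add]
    exact PosSemidef.add hx hy
  smul {r x} hr hx := by
    rw [JPositive, mul_smul_comm]
    exact PosSemidef.smul hx hr
  nonneg {x} hx := by
    have := PosSemidef.trace_nonneg hx
    rw [trace_mul_comm, trace_mul_eq_jTrace hJ (hx.jAdj_eq hJ)] at this
    exact_mod_cast this
  eq_zero {x} hx h0 := by
    have h1 := trace_mul_eq_jTrace hJ (hx.jAdj_eq hJ)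
    rw [h0, trace_mul_comm, Complex.ofReal_zero] at h1
    have h2 := (PosSemidef.trace_eq_zero_iff hx).1 h1
    rw [← one_mul x, ← hJ.2, mul_assoc, h2, mul_zero]

/-- Every `J`-selfadjoint matrix is a difference of `J`-positive ones: for Hermitian `H = J A`,
`4 H = (H + 1)² - (H - 1)²`. -/
lemma jAdj_eq_iff_exists_sub (hJ : IsFundamentalSymmetry J) (A : Matrix (Fin n) (Fin n) ℂ) :
    jAdj J A = A ↔ ∃ B C, JPositive J B ∧ JPositive J C ∧ A = B - C := by
  constructor
  · intro hA
    have hH := (jAdj_eq_iff hJ A).1 hA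
    have hsq : ∀ K : Matrix (Fin n) (Fin n) ℂ, K.IsHermitian →
        JPositive J ((1 / 4 : ℝ) • (J * (K * K))) := by
      intro K hK
      have := posSemidef_conjTranspose_mul_self K
      rw [hK.eq] at this
      rw [JPositive, mul_smul_comm, ← mul_assoc J J, hJ.2, one_mul]
      exact this.smul (by norm_num)
    refine ⟨_, _, hsq (J * A + 1) (hH.add isHermitian_one), hsq (J * A - 1)
      (hH.sub isHermitian_one), ?_⟩
    have e : (J * A + 1) * (J * A + 1) - (J * A - 1) * (J * A - 1) = (4 : ℝ) • (J * A) := by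
      have : (4 : ℝ) • (J * A) = J * A + J * A + (J * A + J * A) := by module
      rw [this]
      noncomm_ring
    rw [← smul_sub, ← mul_sub, e, mul_smul_comm, smul_smul, ← mul_assoc, hJ.2, one_mul]
    norm_num
  · rintro ⟨B, C, hB, hC, rfl⟩
    rw [jAdj_eq_iff hJ, mul_sub]
    exact hB.isHermitian.sub hC.isHermitian

end JMatrices

/-- A `J`-state automorphism `𝔰` extends uniquely to a real-linear map on the real
vector space of `J`-selfadjoint matrices, mapping `J`-positive matrices to `J`-positive
matrices; moreover this extension is a bijection of the `J`-selfadjoint matrices onto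
themselves and satisfies `Tr (𝔰̃(T) J) = Tr (T J)` for every `J`-selfadjoint `T`. -/
theorem jstate_automorphism_extends_uniquely {n : ℕ}
    (J : Matrix (Fin n) (Fin n) ℂ) (hJ : IsFundamentalSymmetry J)
    (𝔰 : Matrix (Fin n) (Fin n) ℂ → Matrix (Fin n) (Fin n) ℂ)
    (hbij : Set.BijOn 𝔰 {S | IsJState J S} {S | IsJState J S})
    (haff : ∀ S₁ S₂ : Matrix (Fin n) (Fin n) ℂ, IsJState J S₁ → IsJState J S₂ →
      ∀ β : ℝ, 0 < β → β < 1 →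
        𝔰 (β • S₁ + (1 - β) • S₂) = β • 𝔰 S₁ + (1 - β) • 𝔰 S₂) :
    ∃ f : Matrix (Fin n) (Fin n) ℂ → Matrix (Fin n) (Fin n) ℂ,
      IsRealLinearExtension J 𝔰 f ∧
      Set.BijOn f {A | jAdj J A = A} {A | jAdj J A = A} ∧
      (∀ T : Matrix (Fin n) (Fin n) ℂ, jAdj J T = T → (f T * J).trace = (T * J).trace) ∧
      (∀ g : Matrix (Fin n) (Fin n) ℂ → Matrix (Fin n) (Fin n) ℂ,
        IsRealLinearExtension J 𝔰 g → Set.EqOn g f {A | jAdj J A = A}) := by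
  have hst := isJState_iff_s3 hJ
  have hset : {S | IsJState J S} = {S | JPositive J S ∧ jTrace J S = 1} := Set.ext hst
  obtain ⟨f, hf, hfb, hft, hfu⟩ := (basedCone_jPositive hJ).exists_extension (hset ▸ hbij)
    (fun x y hx hy => haff x y ((hst x).2 hx) ((hst y).2 hy)) (jAdj_eq_iff_exists_sub hJ)
  refine ⟨f, ⟨hf.1, hf.2.1, fun S hS => hf.2.2.1 S ((hst S).1 hS), hf.2.2.2⟩, hfb, ?_, ?_⟩
  · intro T hT
    rw [trace_mul_eq_jTrace hJ hT, trace_mul_eq_jTrace hJ (hfb.mapsTo hT), hft T hT]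
  · intro g hg
    exact hfu g hg.1 hg.2.1 fun S hS => hg.2.2.1 S ((hst S).2 hS)
end

section
/- Let J ∈ M_n(ℂ) be a fundamental symmetry and let 𝔰 be a J-state automorphism, i.e., a bijection of the set 𝔖_J(ℂⁿ) of quantum J-states onto itself satisfying 𝔰(βS₁ + (1−β)S₂) = β𝔰(S₁) + (1−β)𝔰(S₂) for all quantum J-states S₁, S₂ and all β ∈ (0,1). Then 𝔰 maps pure quantum J-states to pure quantum J-states. -/
/-!
`B ↦ J * B` identifies the quantum `J`-states with the density matrices (positive semidefinite of
trace one), and pure `J`-states with the rank-one projections `e e*`. The latter are extreme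
points (`eq_of_convexComb_eq_pure`), and conversely every density matrix either is of this form or
is a proper convex combination one of whose terms is (`exists_sub_smul_pure_posSemidef`). Let `P` be
pure. If `𝔰 P` is a proper convex combination of a pure state `Q₁` and a state `Q₂`, then pulling
both back along the affine bijection `𝔰` writes `P` as a proper convex combination; extremality of
`P` forces the preimage of `Q₁` to be `P`, hence `𝔰 P = Q₁` is pure.
-/

open Matrix
open scoped ComplexOrder

open scoped MatrixOrder in
lemma exists_eq_conjTranspose_mul_self {n : ℕ} {A : Matrix (Fin n) (Fin n) ℂ}
    (hA : A.PosSemidef) : ∃ C : Matrix (Fin n) (Fin n) ℂ, A = Cᴴ * C :=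
  CStarAlgebra.nonneg_iff_eq_star_mul_self.mp hA.nonneg

/-- Extremality of a rank-one projection among density matrices. The compression of `A` to the
orthogonal complement of `e` vanishes, which gives `A = A P = P A P`, a multiple of `P = e e*`. -/
lemma eq_of_convexComb_eq_pure {n : ℕ} {A B : Matrix (Fin n) (Fin n) ℂ} {e : Fin n → ℂ}
    (he : star e ⬝ᵥ e = 1) (hA : A.PosSemidef) (hB : B.PosSemidef) (htr : A.trace = 1)
    {β : ℝ} (h0 : 0 < β) (h1 : β < 1)
    (h : β • A + (1 - β) • B = vecMulVec e (star e)) : A = vecMulVec e (star e) := by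
  set P := vecMulVec e (star e) with hP
  have hPH : Pᴴ = P := by simp [hP, conjTranspose_vecMulVec]
  have hPP : P * P = P := by simp [hP, vecMulVec_mul_vecMulVec, he]
  set Q := 1 - P with hQ
  have hQH : Qᴴ = Q := by simp [hQ, hPH]
  have hQP : Q * P = 0 := by simp [hQ, sub_mul, hPP]
  have hA' : (Qᴴ * A * Q).PosSemidef := hA.conjTranspose_mul_mul_same Q
  have hB' : (Qᴴ * B * Q).PosSemidef := hB.conjTranspose_mul_mul_same Q
  have hsum : β • (Qᴴ * A * Q) + (1 - β) • (Qᴴ * B * Q) = 0 := by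
    have : β • (Qᴴ * A * Q) + (1 - β) • (Qᴴ * B * Q)
        = Qᴴ * (β • A + (1 - β) • B) * Q := by
      simp [mul_add, add_mul]
    rw [this, h, hQH, hQP, zero_mul]
  have hz : Qᴴ * A * Q = 0 := by
    rw [← hA'.trace_eq_zero_iff]
    have ht := congrArg trace hsum
    rw [trace_add, trace_smul, trace_smul, trace_zero] at ht
    have h2 : 0 ≤ β • (Qᴴ * A * Q).trace := smul_nonneg h0.le hA'.trace_nonneg
    have h3 : 0 ≤ (1 - β) • (Qᴴ * B * Q).trace := smul_nonneg (by linarith) hB'.trace_nonneg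
    exact (smul_eq_zero.1 ((add_eq_zero_iff_of_nonneg h2 h3).1 ht).1).resolve_left h0.ne'
  have hAQ : A * Q = 0 := by
    obtain ⟨C, rfl⟩ := exists_eq_conjTranspose_mul_self hA
    have : C * Q = 0 := by
      rw [← conjTranspose_mul_self_eq_zero, conjTranspose_mul]
      simpa [mul_assoc] using hz
    rw [mul_assoc, this, mul_zero]
  have hAP : A * P = A := by
    rw [hQ, mul_sub, mul_one, sub_eq_zero] at hAQ
    exact hAQ.symm
  have hPA : P * A = A := by
    have := congrArg conjTranspose hAP
    rwa [conjTranspose_mul, hPH, hA.1.eq] at this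
  -- `P A P = (e* A e) P`, and the trace identifies the scalar as `1`.
  have hc : A = (star e ⬝ᵥ (A *ᵥ e)) • P := by
    conv_lhs => rw [← hPA, ← hAP]
    rw [hP, mul_vecMulVec, vecMulVec_mul_vecMulVec, vecMulVec_smul]
  have hs : star e ⬝ᵥ (A *ᵥ e) = 1 := by
    have := congrArg trace hc
    rw [htr, trace_smul, hP, trace_vecMulVec, dotProduct_comm e, he] at this
    simpa using this.symm
  rw [hc, hs, one_smul]

/-- A positive multiple of some rank-one projection can be split off a nonzero positive
semidefinite matrix: writing `A = Cᴴ C`, take the projection given by a nonzero row of `C`. -/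
lemma exists_sub_smul_pure_posSemidef {n : ℕ} {A : Matrix (Fin n) (Fin n) ℂ}
    (hA : A.PosSemidef) (hne : A ≠ 0) :
    ∃ (e : Fin n → ℂ) (c : ℝ), star e ⬝ᵥ e = 1 ∧ 0 < c ∧
      (A - c • vecMulVec e (star e)).PosSemidef := by
  obtain ⟨C, hC⟩ := exists_eq_conjTranspose_mul_self hA
  have hk : ∃ k, star (C k) ≠ 0 := by
    by_contra! hk
    apply hne
    have : C = 0 := by
      ext i j
      simpa using congrFun (hk i) j
    rw [hC, this, mul_zero]
  obtain ⟨k, hk⟩ := hk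
  have hsum : A = ∑ i, vecMulVec (star (C i)) (star (star (C i))) := by
    rw [hC]
    ext i j
    simp [mul_apply, Matrix.sum_apply, vecMulVec_apply]
  set v := star (C k) with hv
  have hpos : 0 < star v ⬝ᵥ v := dotProduct_star_self_pos_iff.2 hk
  obtain ⟨c, hc0, hc⟩ : ∃ c : ℝ, 0 < c ∧ star v ⬝ᵥ v = (c : ℂ) := by
    refine ⟨(star v ⬝ᵥ v).re, (Complex.lt_def.1 hpos).1, ?_⟩
    apply Complex.ext
    · simp
    · simpa using (Complex.lt_def.1 hpos).2.symm
  have hsq : Real.sqrt c * Real.sqrt c = c := Real.mul_self_sqrt hc0.le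
  have hcc : c * ((Real.sqrt c)⁻¹ * (Real.sqrt c)⁻¹) = 1 := by
    rw [← mul_inv, hsq, mul_inv_cancel₀ hc0.ne']
  refine ⟨(Real.sqrt c)⁻¹ • v, c, ?_, hc0, ?_⟩
  · rw [star_smul, smul_dotProduct, dotProduct_smul, hc, star_trivial, smul_smul,
      Complex.real_smul, ← Complex.ofReal_mul, mul_comm, hcc, Complex.ofReal_one]
  · have hv2 : c • vecMulVec ((Real.sqrt c)⁻¹ • v) (star ((Real.sqrt c)⁻¹ • v))
        = vecMulVec v (star v) := by
      rw [star_smul, star_trivial, smul_vecMulVec, vecMulVec_smul, smul_smul, smul_smul, mul_assoc, hcc,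
        one_smul]
    rw [hv2, hsum, ← Finset.add_sum_erase _ _ (Finset.mem_univ k), add_sub_cancel_left]
    exact posSemidef_sum _ fun i _ => posSemidef_vecMulVec_self_star _

/-- Density matrices `A` correspond to `J`-states `J * A`. -/
lemma isJState_mul {n : ℕ} {J A : Matrix (Fin n) (Fin n) ℂ} (hJ : IsFundamentalSymmetry J)
    (hA : A.PosSemidef) (htr : A.trace = 1) : IsJState J (J * A) := by
  refine ⟨?_, ?_⟩
  · rwa [JPositive, ← mul_assoc, hJ.2, one_mul]
  · rw [trace_mul_comm, ← mul_assoc, hJ.2, one_mul, htr]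

/-- A `J`-state automorphism maps pure quantum `J`-states to pure quantum `J`-states. -/
theorem jstate_automorphism_maps_pure_to_pure {n : ℕ}
    (J : Matrix (Fin n) (Fin n) ℂ) (hJ : IsFundamentalSymmetry J)
    (𝔰 : Matrix (Fin n) (Fin n) ℂ → Matrix (Fin n) (Fin n) ℂ)
    (hbij : Set.BijOn 𝔰 {S | IsJState J S} {S | IsJState J S})
    (haff : ∀ S₁ S₂ : Matrix (Fin n) (Fin n) ℂ, IsJState J S₁ → IsJState J S₂ →
      ∀ β : ℝ, 0 < β → β < 1 →
        𝔰 (β • S₁ + (1 - β) • S₂) = β • 𝔰 S₁ + (1 - β) • 𝔰 S₂) :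
    ∀ P : Matrix (Fin n) (Fin n) ℂ, IsPureJState J P → IsPureJState J (𝔰 P) := by
  rintro P ⟨e, he, hPe⟩
  have hJJ : ∀ M : Matrix (Fin n) (Fin n) ℂ, J * (J * M) = M := fun M => by
    rw [← mul_assoc, hJ.2, one_mul]
  have htrace : ∀ f : Fin n → ℂ, star f ⬝ᵥ f = 1 → (vecMulVec f (star f)).trace = 1 :=
    fun f hf => by rw [trace_vecMulVec, dotProduct_comm, hf]
  have hPe' : P = J * vecMulVec e (star e) := by rw [hPe, mul_vecMulVec]
  have hP : IsJState J P :=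
    hPe' ▸ isJState_mul hJ (posSemidef_vecMulVec_self_star e) (htrace e he)
  obtain ⟨hρ, hρt⟩ : IsJState J (𝔰 P) := hbij.mapsTo hP
  rw [trace_mul_comm] at hρt
  set ρ := J * 𝔰 P with hρdef
  have hsP : 𝔰 P = J * ρ := (hJJ _).symm
  have hne : ρ ≠ 0 := by
    intro h
    simp [h] at hρt
  obtain ⟨f, c, hf, hc0, hσ⟩ := exists_sub_smul_pure_posSemidef hρ hne
  refine ⟨f, hf, ?_⟩
  rw [← mul_vecMulVec]
  set F := vecMulVec f (star f) with hF
  have hFp : F.PosSemidef := posSemidef_vecMulVec_self_star f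
  have hσt : (ρ - c • F).trace = ((1 - c : ℝ) : ℂ) := by
    rw [trace_sub, trace_smul, hρt, htrace f hf]
    simp
  have hc1 : c ≤ 1 := by
    have := hσ.trace_nonneg
    rw [hσt, Complex.zero_le_real] at this
    linarith
  rcases hc1.eq_or_lt with rfl | hc1
  · -- The remainder has trace zero, so `ρ` itself is the projection.
    have : ρ - (1 : ℝ) • F = 0 := hσ.trace_eq_zero_iff.1 (by rw [hσt, sub_self, Complex.ofReal_zero])
    rw [hsP, sub_eq_zero.1 this, one_smul]
  · have hd : 0 < 1 - c := by linarith
    set τ := (1 - c)⁻¹ • (ρ - c • F) with hτ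
    have hτp : τ.PosSemidef := hσ.smul (inv_pos.2 hd).le
    have hτt : τ.trace = 1 := by
      rw [hτ, trace_smul, hσt, Complex.real_smul, ← Complex.ofReal_mul, inv_mul_cancel₀ hd.ne',
        Complex.ofReal_one]
    have hdec : c • (J * F) + (1 - c) • (J * τ) = 𝔰 P := by
      rw [hsP, ← Matrix.mul_smul, ← Matrix.mul_smul, ← mul_add, hτ, smul_smul,
        mul_inv_cancel₀ hd.ne', one_smul, add_sub_cancel]
    obtain ⟨S₁, hS₁, h₁⟩ := hbij.surjOn (isJState_mul hJ hFp (htrace f hf))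
    obtain ⟨S₂, hS₂, h₂⟩ := hbij.surjOn (isJState_mul hJ hτp hτt)
    have hS₁t : (J * S₁).trace = 1 := by rw [trace_mul_comm]; exact hS₁.2
    have hS₂t : (J * S₂).trace = 1 := by rw [trace_mul_comm]; exact hS₂.2
    have hmul : J * (c • S₁ + (1 - c) • S₂) = c • (J * S₁) + (1 - c) • (J * S₂) := by
      rw [mul_add, Matrix.mul_smul, Matrix.mul_smul]
    have hS : IsJState J (c • S₁ + (1 - c) • S₂) := by
      refine ⟨?_, ?_⟩
      · rw [JPositive, hmul]
        exact (PosSemidef.smul hS₁.1 hc0.le).add (PosSemidef.smul hS₂.1 hd.le)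
      · rw [trace_mul_comm, hmul, trace_add, trace_smul, trace_smul, hS₁t, hS₂t]
        simp
    have hPS : c • S₁ + (1 - c) • S₂ = P := by
      apply hbij.injOn hS hP
      rw [haff S₁ S₂ hS₁ hS₂ c hc0 hc1, h₁, h₂, hdec]
    have hJS₁ : J * S₁ = vecMulVec e (star e) := by
      refine eq_of_convexComb_eq_pure he hS₁.1 hS₂.1 hS₁t hc0 hc1 ?_
      rw [← hmul, hPS, hPe', hJJ]
    rw [← h₁, ← hJJ S₁, hJS₁, ← hPe']
end

section
/- Let J ∈ M_n(ℂ) be a fundamental symmetry. If Φ : M_n(ℂ) → M_n(ℂ) is a completely positive linear map, then Ψ(A) = J Φ(J A) is a Kraus J-map, i.e., there exist ν ∈ ℕ and matrices V₁, …, V_ν ∈ M_n(ℂ) such that Ψ(A) = Σ_{s=1}^{ν} V_s^♮ A V_s for all A ∈ M_n(ℂ). Conversely, if Ψ is a Kraus J-map, then Φ(A) = Ψ(J A) J is a completely positive linear map. -/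
/-!
Both directions reduce to the ordinary Kraus representation `Φ(A) = ∑ W_sᴴ A W_s`.
Reassociating `J (Wᴴ (J A) W) = (J Wᴴ J) A W` shows that `A ↦ J Φ(J A)` has the Kraus `J`-operators
`W_s`; conversely `(J Vᴴ J) (J A) V J = (V J)ᴴ A (V J)`, because `Jᴴ = J` and `J² = 1`.

The equivalence of complete positivity with the Kraus form is Choi's theorem. For existence
(`exists_kraus_of_completelyPositive`), `Φ^n` applied to the rank-one positive matrix whose `(a, b)`
block is the matrix unit `E_ab` is positive semidefinite, hence of the form `Bᴴ B`; the rows of `B`,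
reshaped to `n × n` matrices, are the Kraus operators. For the converse
(`completelyPositive_of_kraus`), conjugation by `W` acts on block matrices as conjugation by the
block-diagonal matrix with copies of `W`, which preserves positivity.
-/

open Matrix
open scoped ComplexOrder

/-- The `k`-th block map `Φ^k` acting on `k × k` block matrices with `n × n` blocks:
`Φ` is applied to each block. Block `(a, b)` of `C` is the matrix `(i, j) ↦ C (i, a) (j, b)`. -/
def blockMap {n : ℕ} (Φ : Matrix (Fin n) (Fin n) ℂ → Matrix (Fin n) (Fin n) ℂ) (k : ℕ)
    (C : Matrix (Fin n × Fin k) (Fin n × Fin k) ℂ) :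
    Matrix (Fin n × Fin k) (Fin n × Fin k) ℂ :=
  Matrix.of fun p q => Φ (Matrix.of fun i j => C (i, p.2) (j, q.2)) p.1 q.1

/-- The block-diagonal fundamental symmetry `𝒥_k` with `k` diagonal copies of `J`. -/
def Jblock {n : ℕ} (J : Matrix (Fin n) (Fin n) ℂ) (k : ℕ) :
    Matrix (Fin n × Fin k) (Fin n × Fin k) ℂ :=
  Matrix.blockDiagonal fun _ : Fin k => J

/-- `Φ` is completely positive: every block map `Φ^k` preserves positive semidefiniteness. -/
def CompletelyPositive {n : ℕ}
    (Φ : Matrix (Fin n) (Fin n) ℂ → Matrix (Fin n) (Fin n) ℂ) : Prop :=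
  ∀ (k : ℕ) (C : Matrix (Fin n × Fin k) (Fin n × Fin k) ℂ),
    C.PosSemidef → (blockMap Φ k C).PosSemidef

/-- `Ψ` is completely `J`-positive: every block map `Ψ^k` maps `𝒥_k`-positive matrices
to `𝒥_k`-positive matrices. -/
def CompletelyJPositive {n : ℕ} (J : Matrix (Fin n) (Fin n) ℂ)
    (Ψ : Matrix (Fin n) (Fin n) ℂ → Matrix (Fin n) (Fin n) ℂ) : Prop :=
  ∀ (k : ℕ) (C : Matrix (Fin n × Fin k) (Fin n × Fin k) ℂ),
    (Jblock J k * C).PosSemidef → (Jblock J k * blockMap Ψ k C).PosSemidef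

/-- Existence half of Choi's theorem. -/
theorem exists_kraus_of_completelyPositive {n : ℕ}
    (Φ : Matrix (Fin n) (Fin n) ℂ →ₗ[ℂ] Matrix (Fin n) (Fin n) ℂ)
    (hΦ : CompletelyPositive (⇑Φ)) :
    ∃ (ν : ℕ) (W : Fin ν → Matrix (Fin n) (Fin n) ℂ),
      ∀ A : Matrix (Fin n) (Fin n) ℂ, Φ A = ∑ s, (W s)ᴴ * A * W s := by
  -- `v` is the unnormalised maximally entangled vector; block `(a, b)` of `v vᴴ` is `E_ab`.
  let v : Fin n × Fin n → ℂ := fun p => if p.2 = p.1 then 1 else 0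
  have hP := hΦ n _ (posSemidef_vecMulVec_self_star v)
  -- The Loewner order and the `L²` operator norm make square matrices a C⋆-algebra.
  open scoped MatrixOrder Matrix.Norms.L2Operator in
  obtain ⟨B, hB⟩ := CStarAlgebra.nonneg_iff_eq_star_mul_self.mp hP.nonneg
  have hunit (a b p q : Fin n) :
      Φ (single a b 1) p q = ∑ s, star (B s (p, a)) * B s (q, b) := by
    have hv : (Matrix.of fun i j => vecMulVec v (star v) (i, a) (j, b)) = single a b (1 : ℂ) := by
      ext i j
      simp only [of_apply, vecMulVec_apply, v, Pi.star_apply, single_apply]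
      by_cases h1 : a = i <;> by_cases h2 : b = j <;> simp [h1, h2]
    have h := congrFun (congrFun hB (p, a)) (q, b)
    simpa [blockMap, hv, mul_apply] using h
  let e := Fintype.equivFin (Fin n × Fin n)
  refine ⟨_, fun s => Matrix.of fun b q => B (e.symm s) (q, b), fun A => ?_⟩
  rw [e.symm.sum_comp fun s => (Matrix.of fun b q => B s (q, b))ᴴ * A * Matrix.of fun b q => B s (q, b)]
  ext p q
  have hA : Φ A = ∑ a, ∑ b, A a b • Φ (single a b 1) := by
    conv_lhs => rw [matrix_eq_sum_single A]
    simp only [map_sum, ← map_smul, smul_single, smul_eq_mul, mul_one]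
  simp only [hA, Matrix.sum_apply, Matrix.smul_apply, hunit, mul_apply, conjTranspose_apply, of_apply,
    smul_eq_mul, Finset.mul_sum, Finset.sum_mul]
  -- Both sides are the same triple sum, over `a, b, s` on the left and `s, b, a` on the right.
  conv_lhs => rw [Finset.sum_comm]
  conv_rhs => rw [Finset.sum_comm]
  refine Finset.sum_congr rfl fun b _ => ?_
  rw [Finset.sum_comm]
  refine Finset.sum_congr rfl fun s _ => Finset.sum_congr rfl fun a _ => ?_
  ring

theorem blockMap_conj {n : ℕ} (W : Matrix (Fin n) (Fin n) ℂ) (k : ℕ)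
    (C : Matrix (Fin n × Fin k) (Fin n × Fin k) ℂ) :
    blockMap (fun A => Wᴴ * A * W) k C =
      (blockDiagonal fun _ : Fin k => W)ᴴ * C * blockDiagonal fun _ : Fin k => W := by
  ext ⟨p, a⟩ ⟨q, b⟩
  simp [blockMap, mul_apply, Fintype.sum_prod_type, blockDiagonal_apply, Finset.sum_mul]

theorem completelyPositive_of_kraus {n ν : ℕ} (W : Fin ν → Matrix (Fin n) (Fin n) ℂ) :
    CompletelyPositive fun A => ∑ s, (W s)ᴴ * A * W s := by
  intro k C hC
  have h : blockMap (fun A => ∑ s, (W s)ᴴ * A * W s) k C =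
      ∑ s, blockMap (fun A => (W s)ᴴ * A * W s) k C := by
    ext p q
    simp only [blockMap, Matrix.sum_apply, of_apply]
  rw [h]
  refine posSemidef_sum _ fun s _ => ?_
  rw [blockMap_conj]
  exact hC.conjTranspose_mul_mul_same _

/-- If `Φ` is completely positive then `Ψ(A) = J Φ(J A)` is a Kraus `J`-map; conversely,
if `Ψ` is a Kraus `J`-map then `Φ(A) = Ψ(J A) J` is completely positive. -/
theorem kraus_jmap_completely_positive_correspondence {n : ℕ}
    (J : Matrix (Fin n) (Fin n) ℂ) (hJ : IsFundamentalSymmetry J) :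
    (∀ Φ : Matrix (Fin n) (Fin n) ℂ →ₗ[ℂ] Matrix (Fin n) (Fin n) ℂ,
      CompletelyPositive (⇑Φ) →
        ∃ (ν : ℕ) (V : Fin ν → Matrix (Fin n) (Fin n) ℂ),
          ∀ A : Matrix (Fin n) (Fin n) ℂ,
            J * Φ (J * A) = ∑ s, jAdj J (V s) * A * V s) ∧
    (∀ (Ψ : Matrix (Fin n) (Fin n) ℂ → Matrix (Fin n) (Fin n) ℂ)
        (ν : ℕ) (V : Fin ν → Matrix (Fin n) (Fin n) ℂ),
      (∀ A : Matrix (Fin n) (Fin n) ℂ, Ψ A = ∑ s, jAdj J (V s) * A * V s) →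
        CompletelyPositive (fun A => Ψ (J * A) * J)) := by
  obtain ⟨hJs, hJJ⟩ := hJ
  refine ⟨fun Φ hΦ => ?_, fun Ψ ν V hΨ => ?_⟩
  · obtain ⟨ν, W, hW⟩ := exists_kraus_of_completelyPositive Φ hΦ
    refine ⟨ν, W, fun A => ?_⟩
    simp only [hW, jAdj, Finset.mul_sum, Matrix.mul_assoc]
  · have h : (fun A => Ψ (J * A) * J) = fun A => ∑ s, (V s * J)ᴴ * A * (V s * J) := by
      funext A
      rw [hΨ, Finset.sum_mul]
      refine Finset.sum_congr rfl fun s _ => ?_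
      calc jAdj J (V s) * (J * A) * V s * J
          = J * (V s)ᴴ * (J * J) * A * (V s * J) := by simp only [jAdj, Matrix.mul_assoc]
        _ = (V s * J)ᴴ * A * (V s * J) := by
          rw [hJJ, Matrix.mul_one, conjTranspose_mul, hJs]
    rw [h]
    exact completelyPositive_of_kraus _
end

section
/- Let J ∈ M_n(ℂ) be a fundamental symmetry. Every admissible Kraus J-positive map Ψ — a map of the form Ψ(A) = Σ_{i=1}^{ν} V_i^♮ A V_i with Σ_{i=1}^{ν} V_i J V_i^♮ = J — is a quantum J-channel: Ψ is completely J-positive and the map A ↦ J Ψ(J A) is trace-preserving. -/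
/-!
Because `J² = 1`, a factor `J` in front of `V_i^♮ = J V_iᴴ J` cancels, leaving `V_iᴴ J`.

* Complete `J`-positivity: with `W_i` the block-diagonal matrix with `k` copies of `V_i`, the same
  cancellation at the level of blocks gives `𝒥_k Ψ^k(C) = ∑ i, W_iᴴ (𝒥_k C) W_i`
  (`Jblock_mul_blockMap`), a sum of congruences of the positive semidefinite matrix `𝒥_k C`.
* Trace preservation: the admissibility condition says `∑ i, V_i V_iᴴ = 1`, and
  `J Ψ(J A) = ∑ i, V_iᴴ A V_i`, so cyclicity of the trace gives `Tr (J Ψ(J A)) = Tr A`.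
-/

open Matrix
open scoped ComplexOrder

/-- Left multiplication by a constant block-diagonal matrix acts on each block separately. -/
lemma blockDiagonal_const_mul_apply {n k : ℕ} (X : Matrix (Fin n) (Fin n) ℂ)
    (C : Matrix (Fin n × Fin k) (Fin n × Fin k) ℂ) (p q : Fin n × Fin k) :
    ((blockDiagonal fun _ : Fin k => X) * C) p q = ∑ j, X p.1 j * C (j, p.2) q := by
  simp [mul_apply, Fintype.sum_prod_type, blockDiagonal_apply, ite_mul]

/-- Right multiplication by a constant block-diagonal matrix acts on each block separately. -/
lemma mul_blockDiagonal_const_apply {n k : ℕ} (Y : Matrix (Fin n) (Fin n) ℂ)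
    (C : Matrix (Fin n × Fin k) (Fin n × Fin k) ℂ) (p q : Fin n × Fin k) :
    (C * (blockDiagonal fun _ : Fin k => Y)) p q = ∑ j, C p (j, q.2) * Y j q.1 := by
  simp [mul_apply, Fintype.sum_prod_type, blockDiagonal_apply, mul_ite]

lemma blockMap_sum_mul_mul {n ν k : ℕ} (X Y : Fin ν → Matrix (Fin n) (Fin n) ℂ)
    (C : Matrix (Fin n × Fin k) (Fin n × Fin k) ℂ) :
    blockMap (fun A => ∑ i, X i * A * Y i) k C =
      ∑ i, (blockDiagonal fun _ : Fin k => X i) * C * (blockDiagonal fun _ : Fin k => Y i) := by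
  ext p q
  simp only [blockMap, of_apply, Matrix.sum_apply, mul_blockDiagonal_const_apply,
    blockDiagonal_const_mul_apply]
  simp only [mul_apply, of_apply]

lemma mul_jAdj {n : ℕ} {J : Matrix (Fin n) (Fin n) ℂ} (hJ : IsFundamentalSymmetry J)
    (M : Matrix (Fin n) (Fin n) ℂ) : J * jAdj J M = Mᴴ * J := by
  rw [jAdj, ← mul_assoc, ← mul_assoc, hJ.2, one_mul]

lemma Jblock_mul_blockMap {n ν k : ℕ} {J : Matrix (Fin n) (Fin n) ℂ}
    (hJ : IsFundamentalSymmetry J) (V : Fin ν → Matrix (Fin n) (Fin n) ℂ)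
    (C : Matrix (Fin n × Fin k) (Fin n × Fin k) ℂ) :
    Jblock J k * blockMap (fun A => ∑ i, jAdj J (V i) * A * V i) k C =
      ∑ i, (blockDiagonal fun _ : Fin k => V i)ᴴ * (Jblock J k * C) *
        (blockDiagonal fun _ : Fin k => V i) := by
  rw [blockMap_sum_mul_mul, Finset.mul_sum]
  refine Finset.sum_congr rfl fun i _ => ?_
  have h : Jblock J k * (blockDiagonal fun _ : Fin k => jAdj J (V i)) =
      (blockDiagonal fun _ : Fin k => V i)ᴴ * Jblock J k := by
    simp only [Jblock, blockDiagonal_conjTranspose, ← blockDiagonal_mul, mul_jAdj hJ]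
  rw [← mul_assoc, ← mul_assoc, h, mul_assoc _ (Jblock J k) C]

/-- Every admissible Kraus `J`-positive map `Ψ(A) = Σ_i V_i^♮ A V_i` with
`Σ_i V_i J V_i^♮ = J` is a quantum `J`-channel: it is completely `J`-positive and
`A ↦ J Ψ(J A)` is trace-preserving. -/
theorem admissible_kraus_jmap_is_quantum_jchannel {n : ℕ}
    (J : Matrix (Fin n) (Fin n) ℂ) (hJ : IsFundamentalSymmetry J)
    (ν : ℕ) (V : Fin ν → Matrix (Fin n) (Fin n) ℂ)
    (hadm : ∑ i, V i * J * jAdj J (V i) = J) :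
    CompletelyJPositive J (fun A => ∑ i, jAdj J (V i) * A * V i) ∧
    (∀ A : Matrix (Fin n) (Fin n) ℂ,
      (J * ∑ i, jAdj J (V i) * (J * A) * V i).trace = A.trace) := by
  refine ⟨fun k C hC => ?_, fun A => ?_⟩
  · rw [Jblock_mul_blockMap hJ]
    exact posSemidef_sum _ fun i _ => hC.conjTranspose_mul_mul_same _
  · have hV : ∑ i, V i * (V i)ᴴ = 1 := by
      have h : (∑ i, V i * (V i)ᴴ) * J = J := by
        simpa only [Finset.sum_mul, mul_assoc, mul_jAdj hJ] using hadm
      -- cancel the invertible factor `J` on the right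
      simpa only [mul_assoc, hJ.2, mul_one] using congrArg (· * J) h
    have hterm (i : Fin ν) : J * (jAdj J (V i) * (J * A) * V i) = (V i)ᴴ * A * V i := by
      rw [← mul_assoc, ← mul_assoc, mul_jAdj hJ, mul_assoc _ J, ← mul_assoc J, hJ.2, one_mul]
    calc (J * ∑ i, jAdj J (V i) * (J * A) * V i).trace
        = ∑ i, ((V i)ᴴ * A * V i).trace := by
          simp only [Finset.mul_sum, hterm, trace_sum]
      _ = ∑ i, (V i * (V i)ᴴ * A).trace :=
          Finset.sum_congr rfl fun i _ => by rw [trace_mul_comm, mul_assoc]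
      _ = A.trace := by rw [← trace_sum, ← Finset.sum_mul, hV, one_mul]
end

section
/- Let J ∈ M_n(ℂ) be a fundamental symmetry. Every completely J-positive map Ψ : M_n(ℂ) → M_n(ℂ) is a Kraus J-map, i.e., there exist ν ∈ ℕ and matrices V₁, …, V_ν ∈ M_n(ℂ) with Ψ(A) = Σ_{i=1}^{ν} V_i^♮ A V_i for all A. Moreover, every quantum J-channel is an admissible Kraus J-positive map, i.e., the matrices can be chosen so that additionally Σ_{i=1}^{ν} V_i J V_i^♮ = J. -/
/-!
The map `Φ A = J * Ψ (J * A)` inherits from complete `J`-positivity of `Ψ` a positive semidefinite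
Choi matrix: multiplying the rank-one matrix with blocks `E_ab` by `𝒥_n` gives a `𝒥_n`-positive
matrix whose blocks are `J * E_ab`, and `𝒥_n * Ψ^n` of it has blocks `Φ E_ab`. Factoring the Choi
matrix as `Bᴴ * B` and reshaping the rows of `B` gives `Φ A = ∑ Vᵢᴴ * A * Vᵢ` (Choi's theorem,
`kraus_of_choi_posSemidef`). Since `J² = 1`, `Ψ A = J * Φ (J * A) = ∑ (J Vᵢᴴ J) * A * Vᵢ`.
The same `Vᵢ` serve for channels: if `Φ` preserves the trace, then cyclicity and nondegeneracy of
the trace form give `∑ Vᵢ * Vᵢᴴ = 1`, that is, `∑ Vᵢ * J * Vᵢ^♮ = J`.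
-/

open Matrix
open scoped ComplexOrder

/-- Choi's theorem: a linear map whose Choi matrix is positive semidefinite has a Kraus
decomposition. -/
lemma kraus_of_choi_posSemidef {n : ℕ}
    (Φ : Matrix (Fin n) (Fin n) ℂ →ₗ[ℂ] Matrix (Fin n) (Fin n) ℂ)
    (h : (Matrix.of fun p q : Fin n × Fin n => Φ (Matrix.single p.2 q.2 1) p.1 q.1).PosSemidef) :
    ∃ (ν : ℕ) (V : Fin ν → Matrix (Fin n) (Fin n) ℂ),
      ∀ A : Matrix (Fin n) (Fin n) ℂ, Φ A = ∑ i, (V i)ᴴ * A * V i := by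
  open scoped MatrixOrder Matrix.Norms.L2Operator in
  obtain ⟨B, hB⟩ := CStarAlgebra.nonneg_iff_eq_star_mul_self.mp h.nonneg
  have key : ∀ i j a b, Φ (Matrix.single a b 1) i j = ∑ r, star (B r (i, a)) * B r (j, b) := by
    intro i j a b
    simpa [Matrix.mul_apply] using congrFun (congrFun hB (i, a)) (j, b)
  refine ⟨n * n, fun r => Matrix.of fun b j => B (finProdFinEquiv.symm r) (j, b), fun A => ?_⟩
  ext i j
  have hA : A = ∑ a, ∑ b, A a b • Matrix.single a b (1 : ℂ) := by
    conv_lhs => rw [Matrix.matrix_eq_sum_single A]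
    simp [Matrix.smul_single]
  conv_lhs => rw [hA]
  simp only [map_sum, map_smul, Matrix.sum_apply, Matrix.smul_apply, key, smul_eq_mul]
  rw [Equiv.sum_comp finProdFinEquiv.symm (fun r : Fin n × Fin n =>
    ((Matrix.of fun b j => B r (j, b) : Matrix (Fin n) (Fin n) ℂ)ᴴ * A *
      (Matrix.of fun b j => B r (j, b))) i j)]
  simp only [Matrix.mul_apply, Matrix.conjTranspose_apply, Matrix.of_apply, Finset.mul_sum,
    Finset.sum_mul]
  rw [Finset.sum_comm, Finset.sum_congr rfl (fun b _ => Finset.sum_comm), Finset.sum_comm]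
  refine Finset.sum_congr rfl fun r _ => Finset.sum_congr rfl fun b _ =>
    Finset.sum_congr rfl fun a _ => by ring

/-- Blocks of `𝒥_k * C` are `J` times the blocks of `C`. -/
lemma Jblock_mul_apply {n k : ℕ} (J : Matrix (Fin n) (Fin n) ℂ)
    (C : Matrix (Fin n × Fin k) (Fin n × Fin k) ℂ) (i j : Fin n) (a b : Fin k) :
    (Jblock J k * C) (i, a) (j, b) = (J * Matrix.of fun i j => C (i, a) (j, b)) i j := by
  simp [Jblock, Matrix.mul_apply, Fintype.sum_prod_type, Matrix.blockDiagonal_apply, ite_mul]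

lemma Jblock_mul_self {n : ℕ} (J : Matrix (Fin n) (Fin n) ℂ) (h : J * J = 1) (k : ℕ) :
    Jblock J k * Jblock J k = 1 := by
  rw [Jblock, ← Matrix.blockDiagonal_mul]
  simp only [h]
  exact Matrix.blockDiagonal_one

/-- The Choi matrix of `A ↦ J * Ψ (J * A)` is positive semidefinite. Only `k = n` is needed: it is
the image under `𝒥_n * Ψ^n` of the `𝒥_n`-positive matrix with blocks `J * E_ab`. -/
lemma choi_posSemidef {n : ℕ}
    (J : Matrix (Fin n) (Fin n) ℂ) (hJ : IsFundamentalSymmetry J)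
    (Ψ : Matrix (Fin n) (Fin n) ℂ → Matrix (Fin n) (Fin n) ℂ)
    (hΨ : CompletelyJPositive J Ψ) :
    (Matrix.of fun p q : Fin n × Fin n =>
      (J * Ψ (J * Matrix.single p.2 q.2 1)) p.1 q.1).PosSemidef := by
  -- The unnormalised maximally entangled vector; `w wᴴ` has blocks `E_ab`.
  let w : Fin n × Fin n → ℂ := fun p => if p.1 = p.2 then 1 else 0
  let C₀ := Matrix.vecMulVec w (star w)
  have hblock : ∀ a b, (Matrix.of fun i j => C₀ (i, a) (j, b)) = Matrix.single a b (1 : ℂ) := by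
    intro a b
    ext i j
    by_cases h1 : i = a <;> by_cases h2 : j = b <;>
      simp [C₀, w, Matrix.vecMulVec_apply, h1, h2, eq_comm (a := a), eq_comm (a := b)]
  have hC := hΨ n (Jblock J n * C₀) (by
    rw [← Matrix.mul_assoc, Jblock_mul_self J hJ.2, Matrix.one_mul]
    exact Matrix.posSemidef_vecMulVec_self_star w)
  convert hC using 1
  ext ⟨i, a⟩ ⟨j, b⟩
  rw [Jblock_mul_apply]
  simp only [blockMap, Matrix.of_apply, Jblock_mul_apply, hblock]
  rfl

/-- Trace preservation of a Kraus map, read through nondegeneracy of the trace form. -/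
lemma sum_mul_conjTranspose_eq_one {n ν : ℕ} (V : Fin ν → Matrix (Fin n) (Fin n) ℂ)
    (h : ∀ A : Matrix (Fin n) (Fin n) ℂ, (∑ i, (V i)ᴴ * A * V i).trace = A.trace) :
    ∑ i, V i * (V i)ᴴ = 1 := by
  refine Matrix.ext_iff_trace_mul_right.mpr fun A => ?_
  rw [Matrix.one_mul, ← h A, Finset.sum_mul, Matrix.trace_sum, Matrix.trace_sum]
  exact Finset.sum_congr rfl fun i _ => by rw [Matrix.trace_mul_comm _ (V i), ← Matrix.mul_assoc]

/-- Every completely `J`-positive map is a Kraus `J`-map; moreover every quantum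
`J`-channel is an admissible Kraus `J`-positive map. -/
theorem completelyJPositive_is_kraus_jmap {n : ℕ}
    (J : Matrix (Fin n) (Fin n) ℂ) (hJ : IsFundamentalSymmetry J)
    (Ψ : Matrix (Fin n) (Fin n) ℂ →ₗ[ℂ] Matrix (Fin n) (Fin n) ℂ)
    (hΨ : CompletelyJPositive J (⇑Ψ)) :
    (∃ (ν : ℕ) (V : Fin ν → Matrix (Fin n) (Fin n) ℂ),
      ∀ A : Matrix (Fin n) (Fin n) ℂ, Ψ A = ∑ i, jAdj J (V i) * A * V i) ∧
    ((∀ A : Matrix (Fin n) (Fin n) ℂ, (J * Ψ (J * A)).trace = A.trace) →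
      ∃ (ν : ℕ) (V : Fin ν → Matrix (Fin n) (Fin n) ℂ),
        (∀ A : Matrix (Fin n) (Fin n) ℂ, Ψ A = ∑ i, jAdj J (V i) * A * V i) ∧
        ∑ i, V i * J * jAdj J (V i) = J) := by
  obtain ⟨ν, V, hV⟩ := kraus_of_choi_posSemidef
    (LinearMap.mulLeft ℂ J ∘ₗ Ψ ∘ₗ LinearMap.mulLeft ℂ J) (choi_posSemidef J hJ Ψ hΨ)
  replace hV : ∀ A, J * Ψ (J * A) = ∑ i, (V i)ᴴ * A * V i := hV
  have hK : ∀ A, Ψ A = ∑ i, jAdj J (V i) * A * V i := by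
    intro A
    have h := congrArg (J * ·) (hV (J * A))
    simp only [← Matrix.mul_assoc, hJ.2, Matrix.one_mul, Finset.mul_sum] at h
    simpa only [jAdj] using h
  refine ⟨⟨ν, V, hK⟩, fun htr => ⟨ν, V, hK, ?_⟩⟩
  have h1 := sum_mul_conjTranspose_eq_one V fun A => by rw [← hV, htr]
  calc ∑ i, V i * J * jAdj J (V i) = (∑ i, V i * (V i)ᴴ) * J := by
        rw [Finset.sum_mul]
        refine Finset.sum_congr rfl fun i _ => ?_
        rw [jAdj, ← Matrix.mul_assoc, ← Matrix.mul_assoc, Matrix.mul_assoc (V i) J J, hJ.2,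
          Matrix.mul_one]
    _ = J := by rw [h1, Matrix.one_mul]
end
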